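/- Let M be an (A,c)-duplex and let I be a ℤ/2ℤ-graded A-submodule of M that is both injective and projective as an A-module, such that the differential d of M is injective on I and I ∩ d(I) = 0. Then M is isomorphic in the stable category Mod̲₂(Ã_c) to its quotient by the subduplex generated by I, namely to the duplex ⋯ → M⁰/(I⁰ ⊕ d(I¹)) → M¹/(I¹ ⊕ d(I⁰)) → ⋯ with the induced differential. -/

import Mathlib

/-!
STATEMENT 4: If M is an (A,c)-duplex and I a ℤ/2ℤ-graded A-submodule of M that is
both injective and projective as an A-module, with d injective on I and
I ∩ d(I) = 0, then M is isomorphic in the stable category Mod̲₂(Ã_c) to its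
quotient by the subduplex generated by I.
-/

universe u v

structure Duplex (A : Type u) [Ring A] (𝒜 : ZMod 2 → AddSubgroup A) (c : A) where
  carrier : Type v
  [acg : AddCommGroup carrier]
  [mod : Module A carrier]
  grading : ZMod 2 → AddSubgroup carrier
  decomp : DirectSum.IsInternal grading
  smul_mem : ∀ {i j : ZMod 2} {a : A} {m : carrier},
    a ∈ 𝒜 i → m ∈ grading j → a • m ∈ grading (i + j)
  d : carrier →+ carrier
  d_degree : ∀ (i : ZMod 2), ∀ m ∈ grading i, d m ∈ grading (i + 1)
  d_sq : ∀ m : carrier, d (d m) = c • m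
  d_supercomm : ∀ (i : ZMod 2) (a : A), a ∈ 𝒜 i → ∀ m : carrier,
    d (a • m) = ((-1 : ℤ) ^ i.val) • (a • d m)

attribute [instance] Duplex.acg Duplex.mod

variable {A : Type u} [Ring A] {𝒜 : ZMod 2 → AddSubgroup A} {c : A}

def IsDuplexMorphism (M N : Duplex A 𝒜 c) (f : M.carrier →ₗ[A] N.carrier) : Prop :=
  (∀ i : ZMod 2, ∀ m ∈ M.grading i, f m ∈ N.grading i) ∧ ∀ m, f (M.d m) = N.d (f m)

/-- A projective ℤ/2ℤ-graded `Ã_c`-module, i.e. a projective object of the category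
of `(A,c)`-duplexes. -/
def IsProjectiveDuplex (P : Duplex.{u, v} A 𝒜 c) : Prop :=
  ∀ (X Y : Duplex.{u, v} A 𝒜 c)
    (p : X.carrier →ₗ[A] Y.carrier) (f : P.carrier →ₗ[A] Y.carrier),
    IsDuplexMorphism X Y p → Function.Surjective p → IsDuplexMorphism P Y f →
    ∃ g : P.carrier →ₗ[A] X.carrier, IsDuplexMorphism P X g ∧ p ∘ₗ g = f

/-- A morphism of duplexes factors through a projective ℤ/2ℤ-graded `Ã_c`-module. -/
def FactorsThroughProjective (M N : Duplex.{u, v} A 𝒜 c)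
    (f : M.carrier →ₗ[A] N.carrier) : Prop :=
  ∃ (P : Duplex.{u, v} A 𝒜 c) (q : M.carrier →ₗ[A] P.carrier)
    (r : P.carrier →ₗ[A] N.carrier),
    IsProjectiveDuplex P ∧ IsDuplexMorphism M P q ∧ IsDuplexMorphism P N r ∧
    f = r ∘ₗ q

/-- Isomorphism in the stable category `Mod̲₂(Ã_c)` of ℤ/2ℤ-graded `Ã_c`-modules:
morphisms in both directions whose composites differ from the identities by maps
factoring through projectives. -/
def StablyIso (M N : Duplex.{u, v} A 𝒜 c) : Prop :=
  ∃ (f : M.carrier →ₗ[A] N.carrier) (g : N.carrier →ₗ[A] M.carrier),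
    IsDuplexMorphism M N f ∧ IsDuplexMorphism N M g ∧
    FactorsThroughProjective M M (g ∘ₗ f - LinearMap.id) ∧
    FactorsThroughProjective N N (f ∘ₗ g - LinearMap.id)

/-!
The sign rule for `d` is absorbed by the parity involution: `D m = d ((-1)^|m| m)` is `A`-linear
with `D² = -c`, and a degree-preserving `A`-linear map is a duplex morphism exactly when it
commutes with `D`. The hypotheses on `I` say that `E (x, y) = x + D y` embeds `I × I` into `M`,
with image the subduplex generated by `I`.

Injectivity of `I` extends the second projection along `E` to `γ : M → I`, and `γ D + D γ` is then
a projection onto the image of `E` that commutes with `D`. Projectivity of `I` lifts a morphism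
out of the image of `E`: lift it on `I`, then extend by `x + D y ↦ h x + D (h y)`. Both maps become
duplex morphisms on passing to degree-zero parts. So the image of `E` is a projective direct
summand of `M`, and its complement, which is the quotient, is stably isomorphic to `M`.
-/

open DirectSum LinearMap

section LinearAlgebra

variable {R : Type*} [Ring R] {r : R}

theorem isProj_ker_id_sub {V : Type*} [AddCommGroup V] [Module R V] {p : Submodule R V}
    {f : V →ₗ[R] V} (hf : IsProj p f) : IsProj (ker f) (LinearMap.id - f) where
  map_mem v := by
    rw [mem_ker, LinearMap.sub_apply, LinearMap.id_apply, map_sub,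
      hf.map_id _ (hf.map_mem v), sub_self]
  map_id v hv := by
    rw [LinearMap.sub_apply, LinearMap.id_apply, mem_ker.1 hv, sub_zero]

theorem exists_isProj_range_coprod {K V : Type v} [AddCommGroup K] [Module R K] [AddCommGroup V]
    [Module R V] [hK : Module.Injective R K] {S : V →ₗ[R] V} (hS : ∀ v, S (S v) = r • v)
    {ι : K →ₗ[R] V} (hι : Function.Injective (ι.coprod (S ∘ₗ ι))) :
    ∃ L : V →ₗ[R] V, IsProj (range (ι.coprod (S ∘ₗ ι))) L ∧ L ∘ₗ S = S ∘ₗ L := by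
  obtain ⟨γ, hγ⟩ := hK.out _ hι (snd R K K)
  have hγ_ι (x : K) : γ (ι x) = 0 := by simpa using hγ (x, 0)
  have hγ_Sι (y : K) : γ (S (ι y)) = y := by simpa using hγ (0, y)
  let L : V →ₗ[R] V := ι ∘ₗ γ ∘ₗ S + S ∘ₗ ι ∘ₗ γ
  have hL (v : V) : L v = ι (γ (S v)) + S (ι (γ v)) := rfl
  have hLS (v : V) : L (S v) = S (L v) := by
    rw [hL, hL, map_add, hS, hS, map_smul, map_smul, add_comm]
  have hLι (x : K) : L (ι x) = ι x := by
    rw [hL, hγ_ι, hγ_Sι, map_zero, map_zero, add_zero]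
  refine ⟨L, ⟨fun v => ⟨(γ (S v), γ v), by simp [hL]⟩, ?_⟩, LinearMap.ext hLS⟩
  rintro _ ⟨⟨x, y⟩, rfl⟩
  rw [coprod_apply, comp_apply, map_add, hLS, hLι, hLι]

variable {K V W : Type*} [AddCommGroup K] [Module R K] [AddCommGroup V] [Module R V]
  [AddCommGroup W] [Module R W]

theorem exists_extend_of_bijective_coprod {S : V →ₗ[R] V} (hS : ∀ v, S (S v) = r • v)
    {T : W →ₗ[R] W} (hT : ∀ w, T (T w) = r • w) {ι : K →ₗ[R] V}
    (hι : Function.Bijective (ι.coprod (S ∘ₗ ι))) (h : K →ₗ[R] W) :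
    ∃ L : V →ₗ[R] W, L ∘ₗ ι = h ∧ L ∘ₗ S = T ∘ₗ L := by
  let e := LinearEquiv.ofBijective _ hι
  have he (x y : K) : e (x, y) = ι x + S (ι y) := coprod_apply _ _ _
  let L : V →ₗ[R] W := h.coprod (T ∘ₗ h) ∘ₗ e.symm.toLinearMap
  have hL (x y : K) : L (ι x + S (ι y)) = h x + T (h y) := by
    rw [← he]
    simp [L]
  refine ⟨L, LinearMap.ext fun x => by simpa using hL x 0, LinearMap.ext fun v => ?_⟩
  obtain ⟨⟨x, y⟩, rfl⟩ := e.surjective v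
  have hSe : S (e (x, y)) = ι (r • y) + S (ι x) := by
    rw [he, map_add, hS, map_smul, add_comm]
  rw [comp_apply L, comp_apply T, hSe, hL, he, hL, map_add, hT, map_smul, add_comm]

end LinearAlgebra

section GradedModules

variable {ι κ M N σ τ : Type*} [DecidableEq ι] [AddCommMonoid M] [AddCommMonoid N]
  [SetLike σ M] [AddSubmonoidClass σ M] [SetLike τ N] [AddSubmonoidClass τ N]

/-- The additive map on a graded module `M = ⨁ ℳ i` given by `φ i` on the homogeneous elements of
degree `i`. -/
def gradedLift (ℳ : ι → σ) [Decomposition ℳ] (φ : ∀ i, ℳ i →+ N) : M →+ N :=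
  (toAddMonoid φ).comp (decomposeAddEquiv ℳ).toAddMonoidHom

theorem gradedLift_of_mem {ℳ : ι → σ} [Decomposition ℳ] (φ : ∀ i, ℳ i →+ N) {i : ι} {m : M}
    (hm : m ∈ ℳ i) : gradedLift ℳ φ m = φ i ⟨m, hm⟩ := by
  simp [gradedLift, decompose_of_mem ℳ hm]

theorem coe_decompose_map [DecidableEq κ] {ℳ : ι → σ} [Decomposition ℳ] {𝒩 : κ → τ}
    [Decomposition 𝒩] {s : ι → κ} (hs : Function.Injective s) (f : M →+ N)
    (hf : ∀ i, ∀ m ∈ ℳ i, f m ∈ 𝒩 (s i)) (i : ι) (m : M) :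
    (decompose 𝒩 (f m) (s i) : N) = f (decompose ℳ m i) := by
  induction m using Decomposition.inductionOn ℳ with
  | zero => simp
  | @homogeneous j m =>
    obtain rfl | hij := eq_or_ne j i
    · rw [decompose_of_mem_same 𝒩 (hf j m m.2), decompose_of_mem_same ℳ m.2]
    · rw [decompose_of_mem_ne 𝒩 (hf j m m.2) (hs.ne hij), decompose_of_mem_ne ℳ m.2 hij, map_zero]
  | add m n hm hn => simp [hm, hn]

/-- An additive map compatible with multiplication of homogeneous elements by homogeneous scalars,
as a linear map. -/
def linearMapOfHomogeneous {R ρ : Type*} [Semiring R] [SetLike ρ R] [AddSubmonoidClass ρ R]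
    [DecidableEq κ] [Module R M] [Module R N] (ℛ : κ → ρ) [Decomposition ℛ] (ℳ : ι → σ)
    [Decomposition ℳ] (f : M →+ N)
    (hf : ∀ i, ∀ a ∈ ℛ i, ∀ j, ∀ m ∈ ℳ j, f (a • m) = a • f m) : M →ₗ[R] N where
  __ := f
  map_smul' a m := by
    change f (a • m) = a • f m
    induction a using Decomposition.inductionOn ℛ with
    | zero => simp
    | @homogeneous i a =>
      induction m using Decomposition.inductionOn ℳ with
      | zero => simp
      | @homogeneous j m => exact hf i a a.2 j m m.2
      | add m m' hm hm' => rw [smul_add, map_add, hm, hm', map_add, smul_add]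
    | add a b ha hb => rw [add_smul, map_add, ha, hb, add_smul]

section DegreeZeroPart

variable {R ρ : Type*} [Semiring R] [SetLike ρ R] [AddSubmonoidClass ρ R] [DecidableEq κ]
  [VAdd κ ι] [IsLeftCancelVAdd κ ι] [Module R M] [Module R N] (ℛ : κ → ρ) [Decomposition ℛ]
  (ℳ : ι → σ) [Decomposition ℳ] [SetLike.GradedSMul ℛ ℳ] (𝒩 : ι → τ) [Decomposition 𝒩]
  [SetLike.GradedSMul ℛ 𝒩]

/-- The degree-preserving part of a linear map between graded modules: the degree `i` component of
`L` on the homogeneous elements of degree `i`. -/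
def degreeZeroPart (L : M →ₗ[R] N) : M →ₗ[R] N :=
  linearMapOfHomogeneous ℛ ℳ
    (gradedLift ℳ fun i => (AddSubmonoidClass.subtype (𝒩 i)).comp <|
      (DFinsupp.evalAddMonoidHom i).comp <| (decomposeAddEquiv 𝒩).toAddMonoidHom.comp <|
        L.toAddMonoidHom.comp (AddSubmonoidClass.subtype (ℳ i))) <| by
    intro i a ha j m hm
    rw [gradedLift_of_mem _ (SetLike.GradedSMul.smul_mem ha hm), gradedLift_of_mem _ hm]
    change (decompose 𝒩 (L (a • m)) (i +ᵥ j) : N) = a • (decompose 𝒩 (L m) j : N)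
    rw [map_smul]
    exact coe_decompose_map (s := (i +ᵥ ·)) (fun _ _ => IsLeftCancelVAdd.left_cancel i _ _)
      (DistribSMul.toAddMonoidHom N a) (fun _ _ => SetLike.GradedSMul.smul_mem ha) j (L m)

variable {ℳ}

theorem degreeZeroPart_of_mem (L : M →ₗ[R] N) {i : ι} {m : M} (hm : m ∈ ℳ i) :
    degreeZeroPart ℛ ℳ 𝒩 L m = decompose 𝒩 (L m) i :=
  gradedLift_of_mem _ hm

variable {𝒩}

theorem degreeZeroPart_mem (L : M →ₗ[R] N) {i : ι} {m : M} (hm : m ∈ ℳ i) :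
    degreeZeroPart ℛ ℳ 𝒩 L m ∈ 𝒩 i := by
  rw [degreeZeroPart_of_mem ℛ 𝒩 L hm]
  exact SetLike.coe_mem _

theorem decompose_degreeZeroPart (L : M →ₗ[R] N) (i : ι) (m : M) :
    (decompose 𝒩 (degreeZeroPart ℛ ℳ 𝒩 L m) i : N) = decompose 𝒩 (L (decompose ℳ m i)) i := by
  rw [← degreeZeroPart_of_mem ℛ 𝒩 L (SetLike.coe_mem _)]
  exact coe_decompose_map (ℳ := ℳ) Function.injective_id (degreeZeroPart ℛ ℳ 𝒩 L).toAddMonoidHom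
    (fun _ _ => degreeZeroPart_mem ℛ L) i m

theorem isProj_degreeZeroPart {p : Submodule R M} (hp : p.IsHomogeneous ℳ) {L : M →ₗ[R] M}
    (hL : IsProj p L) : IsProj p (degreeZeroPart ℛ ℳ ℳ L) where
  map_mem m := by
    rw [hp.mem_iff]
    intro i
    rw [decompose_degreeZeroPart]
    exact hp i (hL.map_mem _)
  map_id m hm := by
    apply (decompose ℳ).injective
    ext i
    rw [decompose_degreeZeroPart, hL.map_id _ (hp i hm), decompose_coe, of_eq_same]

end DegreeZeroPart

theorem isInternal_comap_subtype {R M : Type*} [Ring R] [AddCommGroup M] [Module R M]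
    {ℳ : ι → AddSubgroup M} [Decomposition ℳ] {p : Submodule R M} (hp : p.IsHomogeneous ℳ) :
    IsInternal fun i => (ℳ i).comap p.subtype.toAddMonoidHom := by
  let incl (i : ι) : (ℳ i).comap p.subtype.toAddMonoidHom →+ ℳ i :=
    (p.subtype.toAddMonoidHom.comp (AddSubgroup.subtype _)).codRestrict (ℳ i) fun x => x.2
  have hincl (z) : DirectSum.coeAddMonoidHom ℳ (DirectSum.map incl z) =
      (DirectSum.coeAddMonoidHom _ z : p) := by
    induction z using DirectSum.induction_on with
    | zero => simp
    | of i x => rw [DirectSum.map_of, coeAddMonoidHom_of, coeAddMonoidHom_of]; rfl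
    | add x y hx hy => simp [hx, hy]
  constructor
  · intro x y hxy
    refine (DirectSum.map_injective incl).2 (fun i a b hab => ?_)
      ((Decomposition.isInternal ℳ).injective ?_)
    · exact Subtype.ext (Subtype.ext (congr_arg (Subtype.val : ℳ i → M) hab))
    · rw [hincl, hincl, hxy]
  · classical
    intro x
    refine ⟨∑ i ∈ (decompose ℳ (x : M)).support,
      DirectSum.of _ i ⟨⟨decompose ℳ (x : M) i, hp i x.2⟩, (decompose ℳ (x : M) i).2⟩,
      Subtype.ext ?_⟩
    simp [sum_support_decompose]

end GradedModules

noncomputable instance (M : Duplex A 𝒜 c) : Decomposition M.grading :=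
  M.decomp.chooseDecomposition

instance (M : Duplex A 𝒜 c) : SetLike.GradedSMul 𝒜 M.grading :=
  ⟨fun _ _ _ _ ha hm => M.smul_mem ha hm⟩

namespace IsDuplexMorphism

variable {M N : Duplex A 𝒜 c} {f g : M.carrier →ₗ[A] N.carrier}

theorem id : IsDuplexMorphism M M LinearMap.id :=
  ⟨fun _ _ hm => hm, fun _ => rfl⟩

theorem zero : IsDuplexMorphism M N 0 :=
  ⟨fun _ _ _ => zero_mem _, fun _ => (map_zero N.d).symm⟩

theorem sub (hf : IsDuplexMorphism M N f) (hg : IsDuplexMorphism M N g) :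
    IsDuplexMorphism M N (f - g) :=
  ⟨fun i m hm => sub_mem (hf.1 i m hm) (hg.1 i m hm), fun m => by
    rw [LinearMap.sub_apply, LinearMap.sub_apply, hf.2, hg.2, map_sub]⟩

theorem neg (hf : IsDuplexMorphism M N f) : IsDuplexMorphism M N (-f) :=
  zero_sub f ▸ zero.sub hf

theorem decompose_apply (hf : IsDuplexMorphism M N f) (i : ZMod 2) (m : M.carrier) :
    (decompose N.grading (f m) i : N.carrier) = f (decompose M.grading m i) :=
  coe_decompose_map Function.injective_id f.toAddMonoidHom hf.1 i m

end IsDuplexMorphism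

namespace Duplex

section Subduplex

/-- A graded submodule stable under the differential. -/
structure IsSubduplex (M : Duplex A 𝒜 c) (p : Submodule A M.carrier) : Prop where
  isHomogeneous : p.IsHomogeneous M.grading
  d_mem : ∀ m ∈ p, M.d m ∈ p

variable {M N : Duplex A 𝒜 c} {p : Submodule A M.carrier}

/-- A subduplex regarded as a duplex, with the restricted grading and differential. -/
abbrev subduplex (hp : M.IsSubduplex p) : Duplex A 𝒜 c where
  carrier := p
  grading i := (M.grading i).comap p.subtype.toAddMonoidHom
  decomp := isInternal_comap_subtype hp.isHomogeneous
  smul_mem ha hm := M.smul_mem ha hm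
  d := (M.d.comp p.subtype.toAddMonoidHom).codRestrict p fun m => hp.d_mem m m.2
  d_degree i m hm := M.d_degree i m hm
  d_sq m := Subtype.ext (M.d_sq m)
  d_supercomm i a ha m := Subtype.ext (M.d_supercomm i a ha m)

theorem isDuplexMorphism_subtype (hp : M.IsSubduplex p) :
    IsDuplexMorphism (subduplex hp) M p.subtype :=
  ⟨fun _ _ hm => hm, fun _ => rfl⟩

theorem isDuplexMorphism_codRestrict (hp : M.IsSubduplex p) {f : N.carrier →ₗ[A] M.carrier}
    (hf : IsDuplexMorphism N M f) (hfp : ∀ n, f n ∈ p) :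
    IsDuplexMorphism N (subduplex hp) (f.codRestrict p hfp) :=
  ⟨hf.1, fun n => Subtype.ext (hf.2 n)⟩

theorem isSubduplex_ker {f : M.carrier →ₗ[A] N.carrier} (hf : IsDuplexMorphism M N f) :
    M.IsSubduplex (ker f) where
  isHomogeneous i m hm := by
    rw [mem_ker, ← hf.decompose_apply, mem_ker.1 hm, decompose_zero, DirectSum.zero_apply,
      ZeroMemClass.coe_zero]
  d_mem m hm := by rw [mem_ker, hf.2, mem_ker.1 hm, map_zero]

theorem stablyIso_subduplex_of_isProj {M : Duplex.{u, v} A 𝒜 c} {p : Submodule A M.carrier}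
    (hp : M.IsSubduplex p) {e : M.carrier →ₗ[A] M.carrier} (he : IsDuplexMorphism M M e)
    (hep : IsProj p e) (hfac : FactorsThroughProjective M M (e - LinearMap.id)) :
    StablyIso M (subduplex hp) := by
  refine ⟨hep.codRestrict, p.subtype, isDuplexMorphism_codRestrict hp he hep.map_mem,
    isDuplexMorphism_subtype hp, hfac, ?_⟩
  obtain ⟨P, -, -, hP, -⟩ := hfac
  have hretract : hep.codRestrict ∘ₗ p.subtype = LinearMap.id :=
    LinearMap.ext hep.codRestrict_apply_cod
  exact ⟨P, 0, 0, hP, .zero, .zero, by rw [hretract, sub_self, comp_zero]⟩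

end Subduplex

section Twist

/-- The parity involution `m ↦ (-1)^|m| m`, which carries the sign in the rule for `d (a m)`. -/
noncomputable def parity (M : Duplex A 𝒜 c) : M.carrier →+ M.carrier :=
  gradedLift M.grading fun i => (-1 : ℤ) ^ i.val • (M.grading i).subtype

theorem parity_of_mem (M : Duplex A 𝒜 c) {i : ZMod 2} {m : M.carrier} (hm : m ∈ M.grading i) :
    M.parity m = (-1 : ℤ) ^ i.val • m :=
  gradedLift_of_mem _ hm

theorem parity_parity (M : Duplex A 𝒜 c) (m : M.carrier) : M.parity (M.parity m) = m := by
  induction m using Decomposition.inductionOn M.grading with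
  | zero => rw [map_zero, map_zero]
  | homogeneous m =>
    rw [M.parity_of_mem m.2, map_zsmul, M.parity_of_mem m.2, smul_smul, ← mul_pow, neg_mul_neg,
      one_mul, one_pow, one_smul]
  | add m m' hm hm' => rw [map_add, map_add, hm, hm']

theorem parity_mem {M : Duplex A 𝒜 c} {I : Submodule A M.carrier}
    (hI : I.IsHomogeneous M.grading) {m : M.carrier} (hm : m ∈ I) : M.parity m ∈ I := by
  refine hI.mem_iff.2 fun i => ?_
  have hdeg (j : ZMod 2) (n : M.carrier) (hn : n ∈ M.grading j) : M.parity n ∈ M.grading j :=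
    M.parity_of_mem hn ▸ zsmul_mem hn _
  have hcomp : (decompose M.grading (M.parity m) i : M.carrier) =
      M.parity (decompose M.grading m i) :=
    coe_decompose_map Function.injective_id M.parity hdeg i m
  rw [hcomp, M.parity_of_mem (SetLike.coe_mem _)]
  exact zsmul_mem (hI i hm) _

theorem map_parity {M N : Duplex A 𝒜 c} {f : M.carrier →ₗ[A] N.carrier}
    (hf : ∀ i, ∀ m ∈ M.grading i, f m ∈ N.grading i) (m : M.carrier) :
    f (M.parity m) = N.parity (f m) := by
  induction m using Decomposition.inductionOn M.grading with
  | zero => simp only [map_zero]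
  | @homogeneous i m => rw [M.parity_of_mem m.2, N.parity_of_mem (hf i m m.2), map_zsmul]
  | add m m' hm hm' => simp only [map_add, hm, hm']

variable [Decomposition 𝒜]

/-- The differential twisted by parity, `m ↦ d ((-1)^|m| m)`: an `A`-linear operator that
determines `d`, so that `A`-linear constructions apply to it. -/
noncomputable def twist (M : Duplex A 𝒜 c) : M.carrier →ₗ[A] M.carrier :=
  linearMapOfHomogeneous 𝒜 M.grading (M.d.comp M.parity) fun i a ha j m hm => by
    have hsign : ∀ i j : ZMod 2, (-1 : ℤ) ^ (i + j).val * (-1) ^ i.val = (-1) ^ j.val := by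
      decide
    rw [AddMonoidHom.comp_apply, AddMonoidHom.comp_apply, M.parity_of_mem (M.smul_mem ha hm),
      M.parity_of_mem hm, map_zsmul, map_zsmul, M.d_supercomm i a ha, smul_smul, hsign,
      smul_comm]

theorem twist_apply (M : Duplex A 𝒜 c) (m : M.carrier) : M.twist m = M.d (M.parity m) :=
  rfl

theorem twist_parity (M : Duplex A 𝒜 c) (m : M.carrier) : M.twist (M.parity m) = M.d m := by
  rw [twist_apply, parity_parity]

theorem twist_of_mem (M : Duplex A 𝒜 c) {i : ZMod 2} {m : M.carrier} (hm : m ∈ M.grading i) :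
    M.twist m = (-1 : ℤ) ^ i.val • M.d m := by
  rw [twist_apply, M.parity_of_mem hm, map_zsmul]

theorem twist_mem (M : Duplex A 𝒜 c) {i : ZMod 2} {m : M.carrier} (hm : m ∈ M.grading i) :
    M.twist m ∈ M.grading (i + 1) :=
  M.twist_of_mem hm ▸ zsmul_mem (M.d_degree i m hm) _

theorem twist_twist (M : Duplex A 𝒜 c) (m : M.carrier) : M.twist (M.twist m) = (-c) • m := by
  induction m using Decomposition.inductionOn M.grading with
  | zero => rw [map_zero, map_zero, smul_zero]
  | @homogeneous i m =>
    have hsign : ∀ i : ZMod 2, (-1 : ℤ) ^ i.val * (-1) ^ (i + 1).val = -1 := by decide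
    rw [M.twist_of_mem m.2, map_zsmul, M.twist_of_mem (M.d_degree i m m.2), M.d_sq, smul_smul,
      hsign, neg_one_smul, neg_smul]
  | add m m' hm hm' => rw [map_add, map_add, hm, hm', smul_add]

theorem decompose_twist (M : Duplex A 𝒜 c) (i : ZMod 2) (m : M.carrier) :
    (decompose M.grading (M.twist m) (i + 1) : M.carrier) = M.twist (decompose M.grading m i) :=
  coe_decompose_map (add_left_injective 1) M.twist.toAddMonoidHom (fun _ _ => M.twist_mem) i m

variable {M N : Duplex A 𝒜 c}

theorem _root_.IsDuplexMorphism.map_twist {f : M.carrier →ₗ[A] N.carrier}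
    (hf : IsDuplexMorphism M N f) (m : M.carrier) : f (M.twist m) = N.twist (f m) := by
  rw [twist_apply, twist_apply, hf.2, map_parity hf.1]

theorem isDuplexMorphism_of_map_twist {f : M.carrier →ₗ[A] N.carrier}
    (hf : ∀ i, ∀ m ∈ M.grading i, f m ∈ N.grading i) (hD : ∀ m, f (M.twist m) = N.twist (f m)) :
    IsDuplexMorphism M N f :=
  ⟨hf, fun m => by
    rw [← twist_parity, ← twist_parity, hD, map_parity hf]⟩

theorem isDuplexMorphism_degreeZeroPart {L : M.carrier →ₗ[A] N.carrier}
    (hL : L ∘ₗ M.twist = N.twist ∘ₗ L) :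
    IsDuplexMorphism M N (degreeZeroPart 𝒜 M.grading N.grading L) := by
  refine isDuplexMorphism_of_map_twist (fun _ _ => degreeZeroPart_mem 𝒜 L) fun m => ?_
  induction m using Decomposition.inductionOn M.grading with
  | zero => simp only [map_zero]
  | homogeneous m =>
    rw [degreeZeroPart_of_mem 𝒜 _ L (M.twist_mem m.2), degreeZeroPart_of_mem 𝒜 _ L m.2,
      ← comp_apply, hL, comp_apply, decompose_twist]
  | add m m' hm hm' => simp only [map_add, hm, hm']

end Twist

section Projective

variable [Decomposition 𝒜]

theorem comp_degreeZeroPart_eq {P X Y : Duplex A 𝒜 c} {p : X.carrier →ₗ[A] Y.carrier}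
    {f : P.carrier →ₗ[A] Y.carrier} {L : P.carrier →ₗ[A] X.carrier} (hp : IsDuplexMorphism X Y p)
    (hf : IsDuplexMorphism P Y f) (hL : p ∘ₗ L = f) :
    p ∘ₗ degreeZeroPart 𝒜 P.grading X.grading L = f := by
  subst hL
  refine LinearMap.ext fun m => ?_
  induction m using Decomposition.inductionOn P.grading with
  | zero => simp only [map_zero]
  | @homogeneous i m =>
    rw [comp_apply, degreeZeroPart_of_mem 𝒜 _ L m.2, ← hp.decompose_apply]
    exact decompose_of_mem_same _ (hf.1 i m m.2)
  | add m m' hm hm' => simp only [map_add, hm, hm']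

theorem isProjectiveDuplex_of_bijective_coprod {P : Duplex.{u, v} A 𝒜 c} {K : Type*}
    [AddCommGroup K] [Module A K] [Module.Projective A K] {ι : K →ₗ[A] P.carrier}
    (hι : Function.Bijective (ι.coprod (P.twist ∘ₗ ι))) : IsProjectiveDuplex P := by
  intro X Y p f hp hsurj hf
  obtain ⟨h, hh⟩ := Module.projective_lifting_property p (f ∘ₗ ι) hsurj
  obtain ⟨L, hLι, hLD⟩ := exists_extend_of_bijective_coprod P.twist_twist X.twist_twist hι h
  have hpL_ι (x : K) : p (L (ι x)) = f (ι x) :=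
    (congr_arg p (LinearMap.congr_fun hLι x)).trans (LinearMap.congr_fun hh x)
  have hpL : p ∘ₗ L = f := LinearMap.ext fun m => by
    obtain ⟨⟨x, y⟩, rfl⟩ := hι.2 m
    have hLD_y : L (P.twist (ι y)) = X.twist (L (ι y)) := LinearMap.congr_fun hLD (ι y)
    rw [coprod_apply, map_add, map_add, comp_apply, comp_apply, comp_apply, hLD_y, hp.map_twist,
      hf.map_twist, hpL_ι, hpL_ι]
  exact ⟨_, isDuplexMorphism_degreeZeroPart hLD, comp_degreeZeroPart_eq hp hf hpL⟩

end Projective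

section Span

variable [Decomposition 𝒜] {M : Duplex A 𝒜 c} {I : Submodule A M.carrier}

/-- The subduplex generated by a graded submodule `I`. As a set it is `I + d I`, and `d` is replaced
by its linear twist so that the sum is one of submodules. -/
noncomputable def span (M : Duplex A 𝒜 c) (I : Submodule A M.carrier) : Submodule A M.carrier :=
  I ⊔ I.map M.twist

theorem mem_span_iff (hI : I.IsHomogeneous M.grading) {m : M.carrier} :
    m ∈ M.span I ↔ ∃ x ∈ I, ∃ y ∈ I, m = x + M.d y := by
  constructor
  · intro hm
    obtain ⟨x, hx, _, ⟨y, hy, rfl⟩, rfl⟩ := Submodule.mem_sup.1 hm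
    exact ⟨x, hx, M.parity y, parity_mem hI hy, rfl⟩
  · rintro ⟨x, hx, y, hy, rfl⟩
    exact Submodule.add_mem_sup hx ⟨M.parity y, parity_mem hI hy, M.twist_parity y⟩

theorem range_coprod_twist (M : Duplex A 𝒜 c) (I : Submodule A M.carrier) :
    range (I.subtype.coprod (M.twist ∘ₗ I.subtype)) = M.span I := by
  rw [range_coprod, range_comp, Submodule.range_subtype, span]

theorem isSubduplex_span (hI : I.IsHomogeneous M.grading) : M.IsSubduplex (M.span I) where
  isHomogeneous i m hm := by
    obtain ⟨x, hx, _, ⟨y, hy, rfl⟩, rfl⟩ := Submodule.mem_sup.1 hm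
    have hcomp := M.decompose_twist (i - 1) y
    rw [sub_add_cancel] at hcomp
    rw [decompose_add, DirectSum.add_apply, AddSubgroup.coe_add, hcomp]
    exact Submodule.add_mem_sup (hI i hx) (Submodule.mem_map_of_mem (hI (i - 1) hy))
  d_mem m hm := by
    obtain ⟨x, hx, y, hy, rfl⟩ := (mem_span_iff hI).1 hm
    exact (mem_span_iff hI).2 ⟨c • y, I.smul_mem c hy, x, hx, by
      rw [map_add, M.d_sq, add_comm]⟩

theorem injective_coprod_twist (hI : I.IsHomogeneous M.grading)
    (hdinj : ∀ x ∈ I, M.d x = 0 → x = 0) (hd : ∀ x ∈ I, ∀ y ∈ I, x = M.d y → x = 0) :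
    Function.Injective (I.subtype.coprod (M.twist ∘ₗ I.subtype)) := by
  refine (injective_iff_map_eq_zero _).2 ?_
  rintro ⟨x, y⟩ (hxy : (x : M.carrier) + M.d (M.parity y) = 0)
  have hy_mem : M.parity y ∈ I := parity_mem hI y.2
  have hneg : (-x : M.carrier) = M.d (M.parity y) := neg_eq_of_add_eq_zero_right hxy
  have hx : (-x : M.carrier) = 0 := hd _ (I.neg_mem x.2) _ hy_mem hneg
  have hy : M.parity (y : M.carrier) = 0 := hdinj _ hy_mem (hneg.symm.trans hx)
  have hy' : (y : M.carrier) = 0 := by rw [← M.parity_parity y, hy, map_zero]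
  exact Prod.ext (Subtype.ext (neg_eq_zero.1 hx)) (Subtype.ext hy')

theorem isProjectiveDuplex_subduplex_span {M : Duplex.{u, v} A 𝒜 c} {I : Submodule A M.carrier}
    [Module.Projective A I] (hI : I.IsHomogeneous M.grading)
    (hE : Function.Injective (I.subtype.coprod (M.twist ∘ₗ I.subtype))) :
    IsProjectiveDuplex (subduplex (isSubduplex_span hI)) := by
  let P := subduplex (isSubduplex_span hI)
  let ι : I →ₗ[A] P.carrier := Submodule.inclusion le_sup_left
  have hval (z : I × I) : (ι.coprod (P.twist ∘ₗ ι) z : M.carrier) =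
      I.subtype.coprod (M.twist ∘ₗ I.subtype) z :=
    congr_arg ((z.1 : M.carrier) + ·)
      ((isDuplexMorphism_subtype (isSubduplex_span hI)).map_twist (ι z.2))
  refine isProjectiveDuplex_of_bijective_coprod (ι := ι) ⟨fun z w hzw => hE ?_, fun m => ?_⟩
  · rw [← hval, ← hval, hzw]
  · obtain ⟨z, hz⟩ := (M.range_coprod_twist I).ge m.2
    exact ⟨z, Subtype.ext ((hval z).trans hz)⟩

theorem exists_isDuplexMorphism_isProj_span {M : Duplex.{u, v} A 𝒜 c} {I : Submodule A M.carrier}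
    [Module.Injective A I] (hI : I.IsHomogeneous M.grading)
    (hE : Function.Injective (I.subtype.coprod (M.twist ∘ₗ I.subtype))) :
    ∃ ρ : M.carrier →ₗ[A] M.carrier, IsDuplexMorphism M M ρ ∧ IsProj (M.span I) ρ := by
  obtain ⟨L, hL, hLD⟩ := exists_isProj_range_coprod M.twist_twist hE
  rw [range_coprod_twist] at hL
  exact ⟨_, isDuplexMorphism_degreeZeroPart hLD,
    isProj_degreeZeroPart 𝒜 (isSubduplex_span hI).isHomogeneous hL⟩

end Span

theorem isHomogeneous_of_exists_add {M : Duplex A 𝒜 c} {I : Submodule A M.carrier}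
    (hI : ∀ x ∈ I, ∃ x0 ∈ I, ∃ x1 ∈ I,
      x0 ∈ M.grading 0 ∧ x1 ∈ M.grading 1 ∧ x = x0 + x1) : I.IsHomogeneous M.grading := by
  intro i x hx
  obtain ⟨x0, hx0, x1, hx1, h0, h1, rfl⟩ := hI x hx
  rw [decompose_add, DirectSum.add_apply, AddSubgroup.coe_add]
  have hmem {j : ZMod 2} {y : M.carrier} (hy : y ∈ I) (hyj : y ∈ M.grading j) :
      (decompose M.grading y i : M.carrier) ∈ I := by
    obtain rfl | hij := eq_or_ne j i
    · rwa [decompose_of_mem_same _ hyj]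
    · rw [decompose_of_mem_ne _ hyj hij]
      exact I.zero_mem
  exact I.add_mem (hmem hx0 h0) (hmem hx1 h1)

end Duplex

open Duplex in
theorem stablyIso_quot_by_proj_injective_general [Decomposition 𝒜]
    (M : Duplex.{u, v} A 𝒜 c) (I : Submodule A M.carrier)
    (hgr : ∀ x ∈ I, ∃ x0 ∈ I, ∃ x1 ∈ I,
      x0 ∈ M.grading 0 ∧ x1 ∈ M.grading 1 ∧ x = x0 + x1)
    (hinj : Module.Injective A I)
    (hproj : Module.Projective A I)
    (hdinj : ∀ x ∈ I, M.d x = 0 → x = 0)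
    (hd : ∀ x ∈ I, ∀ y ∈ I, x = M.d y → x = 0) :
    ∃ (Q : Duplex.{u, v} A 𝒜 c) (π : M.carrier →ₗ[A] Q.carrier),
      IsDuplexMorphism M Q π ∧
      Function.Surjective π ∧
      (∀ m : M.carrier, π m = 0 ↔ ∃ x ∈ I, ∃ y ∈ I, m = x + M.d y) ∧
      (∀ k : ZMod 2, ∀ q ∈ Q.grading k, ∃ m ∈ M.grading k, π m = q) ∧
      StablyIso M Q := by
  have hI := isHomogeneous_of_exists_add hgr
  have hE := injective_coprod_twist hI hdinj hd
  obtain ⟨ρ, hρ, hρ_proj⟩ := exists_isDuplexMorphism_isProj_span hI hE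
  have hker := isSubduplex_ker hρ
  have he : IsDuplexMorphism M M (LinearMap.id - ρ) := .sub .id hρ
  have he_proj := isProj_ker_id_sub hρ_proj
  refine ⟨subduplex hker, he_proj.codRestrict, isDuplexMorphism_codRestrict hker he he_proj.map_mem,
    fun q => ⟨q, he_proj.codRestrict_apply_cod q⟩, fun m => ?_,
    fun k q hq => ⟨q, hq, he_proj.codRestrict_apply_cod q⟩,
    stablyIso_subduplex_of_isProj hker he he_proj ?_⟩
  · rw [← mem_span_iff hI, hρ_proj.mem_iff_map_id, eq_comm (a := ρ m), ← sub_eq_zero (a := m)]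
    exact Subtype.ext_iff
  · exact ⟨_, _, (M.span I).subtype, isProjectiveDuplex_subduplex_span hI hE,
      isDuplexMorphism_codRestrict (isSubduplex_span hI) hρ.neg
        fun m => neg_mem (hρ_proj.map_mem m),
      isDuplexMorphism_subtype _, by rw [subtype_comp_codRestrict, sub_sub_cancel_left]⟩

/-- Let `M` be an `(A,c)`-duplex and `I` a ℤ/2ℤ-graded
`A`-submodule of `M` that is both injective and projective as an `A`-module, such
that `d` is injective on `I` and `I ∩ d(I) = 0`.  Then `M` is isomorphic in the
stable category `Mod̲₂(Ã_c)` to its quotient by the subduplex generated by `I`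
(namely `M⁰/(I⁰ ⊕ d(I¹)) → M¹/(I¹ ⊕ d(I⁰))`, with the induced differential). -/
theorem stablyIso_quot_by_proj_injective
    [GradedRing 𝒜] (hc : c ∈ 𝒜 0) (hc_central : ∀ a : A, c * a = a * c)
    (M : Duplex.{u, v} A 𝒜 c) (I : Submodule A M.carrier)
    (hgr : ∀ x ∈ I, ∃ x0 ∈ I, ∃ x1 ∈ I,
      x0 ∈ M.grading 0 ∧ x1 ∈ M.grading 1 ∧ x = x0 + x1)
    (hinj : Module.Injective A I)
    (hproj : Module.Projective A I)
    (hdinj : ∀ x ∈ I, M.d x = 0 → x = 0)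
    (hd : ∀ x ∈ I, ∀ y ∈ I, x = M.d y → x = 0) :
    ∃ (Q : Duplex.{u, v} A 𝒜 c) (π : M.carrier →ₗ[A] Q.carrier),
      IsDuplexMorphism M Q π ∧
      Function.Surjective π ∧
      (∀ m : M.carrier, π m = 0 ↔ ∃ x ∈ I, ∃ y ∈ I, m = x + M.d y) ∧
      (∀ k : ZMod 2, ∀ q ∈ Q.grading k, ∃ m ∈ M.grading k, π m = q) ∧
      StablyIso M Q :=
  stablyIso_quot_by_proj_injective_general M I hgr hinj hproj hdinj hd
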